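/- Let s > 1/2 and 1 ≤ p < ∞. The problem of L_p-approximation on the classes F^{s,d}_mix is polynomially tractable. More precisely, for p ≥ 2 there is a constant C > 0, depending only on s and p, such that for all d ≥ 2 and ε ∈ (0, 1/2), n(ε, F^{s,d}_mix, L_p) ≤ C · d² · log(d) · ε^{-p} · log⁴(ε^{-1}). -/

import Mathlib

open MeasureTheory Real Finset

noncomputable section

/-- The unit cube `[0,1]^d`. -/
def cube (d : ℕ) : Set (Fin d → ℝ) := Set.univ.pi fun _ => Set.Icc 0 1

/-- The trigonometric character `e^{2πi⟨k,x⟩}`. -/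
def eK (d : ℕ) (k : Fin d → ℤ) (x : Fin d → ℝ) : ℂ :=
  Complex.exp (2 * Real.pi * Complex.I * ∑ i, (k i : ℂ) * (x i : ℂ))

/-- The Fourier coefficient `f̂(k) = ∫_{[0,1]^d} f(x) e^{-2πi⟨k,x⟩} dx`. -/
def fCoeff (d : ℕ) (f : (Fin d → ℝ) → ℂ) (k : Fin d → ℤ) : ℂ :=
  ∫ x in cube d, f x * Complex.exp (-(2 * Real.pi * Complex.I) * ∑ i, (k i : ℂ) * (x i : ℂ))

/-- `f` is 1-periodic in each coordinate. -/
def Periodic1 (d : ℕ) (f : (Fin d → ℝ) → ℂ) : Prop :=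
  ∀ (x : Fin d → ℝ) (i : Fin d), f (Function.update x i (x i + 1)) = f x

/-- The weight `max(1, log ‖k‖_∞)`. -/
def logWeight (d : ℕ) (k : Fin d → ℤ) : ℝ :=
  max 1 (Real.log ((Finset.univ.sup fun i => (k i).natAbs : ℕ) : ℝ))

/-- The class `F_d^log` of continuous 1-periodic functions with
`∑_k |f̂(k)| max(1, log ‖k‖_∞) ≤ 1`. -/
def FdLog (d : ℕ) : Set ((Fin d → ℝ) → ℂ) :=
  {f | Continuous f ∧ Periodic1 d f ∧
    Summable (fun k : Fin d → ℤ => ‖fCoeff d f k‖ * logWeight d k) ∧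
    ∑' k : Fin d → ℤ, ‖fCoeff d f k‖ * logWeight d k ≤ 1}

/-- The mixed-smoothness weight `∏_{i=1}^d max(1, |k_i|^{2s})`. -/
def wMix (s : ℝ) (d : ℕ) (k : Fin d → ℤ) : ℝ :=
  ∏ i, max 1 (|(k i : ℝ)| ^ (2 * s))

/-- The unit ball `H^{s,d}_mix` of the Sobolev space of mixed smoothness `s`
(unweighted Korobov space). -/
def Hmix (s : ℝ) (d : ℕ) : Set ((Fin d → ℝ) → ℂ) :=
  {f | Continuous f ∧ Periodic1 d f ∧
    Summable (fun k : Fin d → ℤ => ‖fCoeff d f k‖ ^ 2 * wMix s d k) ∧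
    ∑' k : Fin d → ℤ, ‖fCoeff d f k‖ ^ 2 * wMix s d k ≤ 1}

/-- The class `F^{s,d}_mix` of functions in `H^{s,d}_mix` with absolutely summable
Fourier coefficients, `∑_k |f̂(k)| ≤ 1`. -/
def Fmix (s : ℝ) (d : ℕ) : Set ((Fin d → ℝ) → ℂ) :=
  {f | f ∈ Hmix s d ∧ Summable (fun k : Fin d → ℤ => ‖fCoeff d f k‖) ∧
    ∑' k : Fin d → ℤ, ‖fCoeff d f k‖ ≤ 1}

/-!
Two functions of the class that agree at the sampling points differ by `4 h`, where `h` vanishes at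
the points and is uniformly close to a convex combination of `0` and the characters `e^{2πi⟨k,x⟩}`
with `‖k‖_∞ ≤ M`, multiplied by the four phases `±1, ±i`. By Maurey's empirical method, for every
probability measure `ν` and every accuracy `τ`, an average of `m ≈ k τ⁻²` of these atoms is
`τ`-close to `h` outside a set of `ν`-measure of order `e^{-k}`. Taking for `ν` a mixture of the
uniform measure and the point masses at the `n` sampling points gives an average that is small at
*every* sampling point, yet close to `h` on most of the cube. Only finitely many averages of `m`
atoms exist, so by a union bound some `n` random points meet the superlevel set of each of those
averages for which this set is not small. Hence an average that is small at all points is small on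
most of the cube, and so is `h`: for all `j ≤ J` the measure of `{|h| ≥ 2^{-j}}` is at most of order
`4^{j-J} / J`. Summing over the dyadic levels bounds `‖h‖₂²` by a multiple of `4^{-J}`, and
`‖h‖_∞ ≤ 1` turns this into an `L_p` bound for `p ≥ 2`. As the argument controls all pairs of
functions that agree at the points, any choice of a function of the class interpolating the data is
a good algorithm.
-/

section Concentration

variable {Ω κ : Type*} [MeasurableSpace Ω] {P : Measure Ω} [IsProbabilityMeasure P] [Fintype κ]

theorem measureReal_le_abs_sum_sub_integral_le {X : κ → Ω → ℝ}
    (h_indep : ProbabilityTheory.iIndepFun X P) (hX : ∀ i, Measurable (X i))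
    (h_bound : ∀ i ω, |X i ω| ≤ 1) {u : ℝ} (hu : 0 ≤ u) :
    P.real {ω | u ≤ |∑ i, (X i ω - ∫ ω', X i ω' ∂P)|} ≤
      2 * Real.exp (-u ^ 2 / (2 * Fintype.card κ)) := by
  have h_indep' : ProbabilityTheory.iIndepFun (fun i ω => X i ω - ∫ ω', X i ω' ∂P) P :=
    h_indep.comp (fun i y => y - ∫ ω', X i ω' ∂P) fun i => measurable_id.sub_const _
  have h_subG (i : κ) :
      ProbabilityTheory.HasSubgaussianMGF (fun ω => X i ω - ∫ ω', X i ω' ∂P) 1 P := by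
    have h := ProbabilityTheory.hasSubgaussianMGF_of_mem_Icc (μ := P) (a := -1) (b := 1)
      (X := X i) (hX i).aemeasurable (.of_forall fun ω => Set.mem_Icc.2 (abs_le.1 (h_bound i ω)))
    norm_num at h
    exact h
  have h_upper := ProbabilityTheory.HasSubgaussianMGF.measure_sum_ge_le_of_iIndepFun h_indep'
    (s := univ) (fun i _ => h_subG i) hu
  have h_lower := ProbabilityTheory.HasSubgaussianMGF.measure_sum_ge_le_of_iIndepFun
    (h_indep'.comp (fun _ y => -y) fun _ => measurable_neg) (s := univ)
    (fun i _ => (h_subG i).neg) hu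
  simp only [Function.comp_apply, sum_neg_distrib, sum_const, card_univ, nsmul_eq_mul, mul_one,
    NNReal.coe_natCast] at h_upper h_lower
  simp only [le_abs, Set.ofPred_or]
  linarith [measureReal_union_le (μ := P) {ω | u ≤ ∑ i, (X i ω - ∫ ω', X i ω' ∂P)}
    {ω | u ≤ -∑ i, (X i ω - ∫ ω', X i ω' ∂P)}]

theorem measureReal_le_norm_sum_sub_integral_le {Z : κ → Ω → ℂ}
    (h_indep : ProbabilityTheory.iIndepFun Z P) (hZ : ∀ i, Measurable (Z i))
    (h_bound : ∀ i ω, ‖Z i ω‖ ≤ 1) {u : ℝ} (hu : 0 ≤ u) :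
    P.real {ω | u ≤ ‖∑ i, (Z i ω - ∫ ω', Z i ω' ∂P)‖} ≤
      4 * Real.exp (-u ^ 2 / (4 * Fintype.card κ)) := by
  have h_int (i : κ) : Integrable (Z i) P :=
    .of_bound (hZ i).aestronglyMeasurable 1 (.of_forall (h_bound i))
  have h_re := measureReal_le_abs_sum_sub_integral_le
    (h_indep.comp (fun _ => Complex.re) fun _ => Complex.measurable_re)
    (fun i => Complex.measurable_re.comp (hZ i))
    (fun i ω => (Complex.abs_re_le_norm _).trans (h_bound i ω)) (u := u / √2) (by positivity)
  have h_im := measureReal_le_abs_sum_sub_integral_le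
    (h_indep.comp (fun _ => Complex.im) fun _ => Complex.measurable_im)
    (fun i => Complex.measurable_im.comp (hZ i))
    (fun i ω => (Complex.abs_im_le_norm _).trans (h_bound i ω)) (u := u / √2) (by positivity)
  have h_exponent : -(u / √2) ^ 2 / (2 * Fintype.card κ) = -u ^ 2 / (4 * Fintype.card κ) := by
    rw [div_pow, Real.sq_sqrt (by norm_num), ← neg_div, div_div]
    ring
  simp only [h_exponent, Function.comp_apply] at h_re h_im
  have h_integral_re (i : κ) : (∫ ω, Z i ω ∂P).re = ∫ ω, (Z i ω).re ∂P :=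
    (integral_re (h_int i)).symm
  have h_integral_im (i : κ) : (∫ ω, Z i ω ∂P).im = ∫ ω, (Z i ω).im ∂P :=
    (integral_im (h_int i)).symm
  have h_sub : {ω | u ≤ ‖∑ i, (Z i ω - ∫ ω', Z i ω' ∂P)‖} ⊆
      {ω | u / √2 ≤ |∑ i, ((Z i ω).re - ∫ ω', (Z i ω').re ∂P)|} ∪
      {ω | u / √2 ≤ |∑ i, ((Z i ω).im - ∫ ω', (Z i ω').im ∂P)|} := by
    intro ω hω
    have h_max := (Set.mem_ofPred.1 hω).trans (Complex.norm_le_sqrt_two_mul_max _)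
    rw [← div_le_iff₀' (by positivity), le_max_iff] at h_max
    simpa only [Complex.re_sum, Complex.im_sum, Complex.sub_re, Complex.sub_im,
      h_integral_re, h_integral_im, Set.mem_union, Set.mem_ofPred_eq] using h_max
  linarith [(measureReal_mono (μ := P) h_sub).trans (measureReal_union_le _ _)]

end Concentration

section Maurey

variable {ι X : Type*}

/-- The average `m⁻¹ ∑ⱼ U (τ j)` of the members of a dictionary `U` selected by `τ`; Maurey's
method replaces a convex combination of the dictionary by such an average. -/
def empiricalMean (U : ι → X → ℂ) {m : ℕ} (τ : Fin m → ι) (x : X) : ℂ :=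
  (m : ℂ)⁻¹ * ∑ j, U (τ j) x

theorem measureReal_pi_le_norm_empiricalMean_sub_integral_le [MeasurableSpace ι] (w : Measure ι)
    [IsProbabilityMeasure w] {U : ι → X → ℂ} {x : X} (hU : Measurable fun i => U i x)
    (h_bound : ∀ i, ‖U i x‖ ≤ 1) {m : ℕ} (hm : 0 < m) {r : ℝ} (hr : 0 ≤ r) :
    (Measure.pi fun _ : Fin m => w).real {τ | r ≤ ‖empiricalMean U τ x - ∫ i, U i x ∂w‖} ≤
      4 * Real.exp (-(m * r ^ 2 / 4)) := by
  have hm' : (0 : ℝ) < m := by exact_mod_cast hm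
  have h_integral (j : Fin m) :
      ∫ τ, U (τ j) x ∂(Measure.pi fun _ : Fin m => w) = ∫ i, U i x ∂w :=
    integral_comp_eval (μ := fun _ : Fin m => w) (i := j) hU.aestronglyMeasurable
  have h := measureReal_le_norm_sum_sub_integral_le (P := Measure.pi fun _ : Fin m => w)
    (Z := fun j τ => U (τ j) x)
    (ProbabilityTheory.iIndepFun_pi fun _ => hU.aemeasurable)
    (fun j => hU.comp (measurable_pi_apply j)) (fun j τ => h_bound (τ j))
    (u := m * r) (by positivity)
  have h_exponent : -(m * r) ^ 2 / (4 * (Fintype.card (Fin m) : ℝ)) = -(m * r ^ 2 / 4) := by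
    rw [Fintype.card_fin]
    field_simp
  rw [h_exponent] at h
  convert h using 4 with τ
  have h_factor : ∑ j, (U (τ j) x - ∫ τ, U (τ j) x ∂(Measure.pi fun _ : Fin m => w)) =
      m * (empiricalMean U τ x - ∫ i, U i x ∂w) := by
    have : (m : ℂ) ≠ 0 := by exact_mod_cast hm.ne'
    simp only [h_integral, sum_sub_distrib, sum_const, card_univ, Fintype.card_fin, nsmul_eq_mul,
      empiricalMean]
    field_simp
  rw [h_factor, norm_mul, Complex.norm_natCast, mul_le_mul_iff_right₀ hm']

variable [MeasurableSpace X]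

theorem measurable_empiricalMean {U : ι → X → ℂ} (hU : ∀ i, Measurable (U i)) {m : ℕ}
    (τ : Fin m → ι) : Measurable (empiricalMean U τ) :=
  (Finset.measurable_sum _ fun j _ => hU (τ j)).const_mul _

theorem exists_measure_le_norm_empiricalMean_sub_integral_lt_one [MeasurableSpace ι]
    (w : Measure ι) [IsProbabilityMeasure w] (ν : Measure X) [IsFiniteMeasure ν]
    {U : ι → X → ℂ} (hU : Measurable (Function.uncurry U)) (h_bound : ∀ i x, ‖U i x‖ ≤ 1)
    {m : ℕ} (hm : 0 < m) {r : ℝ} (hr : 0 ≤ r)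
    (h_small : 4 * Real.exp (-(m * r ^ 2 / 4)) * ν.real Set.univ < 1) :
    ∃ τ : Fin m → ι, ν {x | r ≤ ‖empiricalMean U τ x - ∫ i, U i x ∂w‖} < 1 := by
  set P := Measure.pi fun _ : Fin m => w
  set A : Set ((Fin m → ι) × X) := {q | r ≤ ‖empiricalMean U q.1 q.2 - ∫ i, U i q.2 ∂w‖}
  have hA : MeasurableSet A := by
    have h_mean : Measurable fun q : (Fin m → ι) × X => empiricalMean U q.1 q.2 :=
      (Finset.measurable_sum _ fun j _ =>
        hU.comp (((measurable_pi_apply j).comp measurable_fst).prodMk measurable_snd)).const_mul _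
    have h_integral : Measurable fun x => ∫ i, U i x ∂w :=
      (hU.comp measurable_swap).stronglyMeasurable.integral_prod_right'.measurable
    exact measurableSet_le measurable_const
      (h_mean.sub (h_integral.comp measurable_snd)).norm
  have h_section (x : X) :
      P ((fun τ => (τ, x)) ⁻¹' A) ≤ ENNReal.ofReal (4 * Real.exp (-(m * r ^ 2 / 4))) :=
    ENNReal.le_ofReal_iff_toReal_le (by finiteness) (by positivity) |>.2 <|
      measureReal_pi_le_norm_empiricalMean_sub_integral_le w (U := U) (x := x)
        (hU.comp measurable_prodMk_right) (fun i => h_bound i x) hm hr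
  obtain ⟨τ, hτ⟩ := exists_le_lintegral (μ := P) (measurable_measure_prodMk_left hA).aemeasurable
    (f := fun τ => ν (Prod.mk τ ⁻¹' A))
  refine ⟨τ, hτ.trans_lt ?_⟩
  calc ∫⁻ τ, ν (Prod.mk τ ⁻¹' A) ∂P = ∫⁻ x, P ((fun τ => (τ, x)) ⁻¹' A) ∂ν := by
        rw [← Measure.prod_apply hA, Measure.prod_apply_symm hA]
    _ ≤ ∫⁻ _, ENNReal.ofReal (4 * Real.exp (-(m * r ^ 2 / 4))) ∂ν := lintegral_mono h_section
    _ = ENNReal.ofReal (4 * Real.exp (-(m * r ^ 2 / 4)) * ν.real Set.univ) := by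
        rw [lintegral_const, ENNReal.ofReal_mul' measureReal_nonneg, ofReal_measureReal]
    _ < 1 := by rwa [ENNReal.ofReal_lt_one]

theorem exists_measure_le_norm_empiricalMean_sub_sum_lt_one [Fintype ι] {w : ι → ℝ}
    (hw : w ∈ stdSimplex ℝ ι) (ν : Measure X) [IsFiniteMeasure ν] {U : ι → X → ℂ}
    (hU : ∀ i, Measurable (U i)) (h_bound : ∀ i x, ‖U i x‖ ≤ 1) {m : ℕ} (hm : 0 < m) {r : ℝ}
    (hr : 0 ≤ r) (h_small : 4 * Real.exp (-(m * r ^ 2 / 4)) * ν.real Set.univ < 1) :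
    ∃ τ : Fin m → ι, ν {x | r ≤ ‖empiricalMean U τ x - ∑ i, w i • U i x‖} < 1 := by
  let _ : MeasurableSpace ι := ⊤
  let W : PMF ι := .ofFintype (fun i => ENNReal.ofReal (w i)) <| by
    rw [← ENNReal.ofReal_sum_of_nonneg fun i _ => hw.1 i, hw.2, ENNReal.ofReal_one]
  have h_integral (x : X) : ∫ i, U i x ∂W.toMeasure = ∑ i, w i • U i x := by
    rw [PMF.integral_eq_sum]
    refine sum_congr rfl fun i _ => ?_
    rw [PMF.ofFintype_apply, ENNReal.toReal_ofReal (hw.1 i)]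
  simpa only [h_integral] using exists_measure_le_norm_empiricalMean_sub_integral_lt_one
    W.toMeasure ν (measurable_from_prod_countable_right hU) h_bound hm hr h_small

end Maurey

section Phases

/-- The coefficient of `I ^ q` in the decomposition of `z` as a nonnegative combination of the
fourth roots of unity `1, I, -1, -I`. -/
def phaseWeight (z : ℂ) (q : Fin 4) : ℝ :=
  max 0 (((-Complex.I) ^ (q : ℕ) * z).re)

theorem phaseWeight_nonneg (z : ℂ) (q : Fin 4) : 0 ≤ phaseWeight z q :=
  le_max_left _ _

theorem sum_phaseWeight_eq_abs_add_abs (z : ℂ) : ∑ q, phaseWeight z q = |z.re| + |z.im| := by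
  rw [← posPart_add_negPart z.re, ← posPart_add_negPart z.im]
  simp only [posPart_def, negPart_def, max_comm _ (0 : ℝ)]
  simp [phaseWeight, Fin.sum_univ_four, pow_succ]
  ring

theorem sum_phaseWeight_mul_I_pow (z : ℂ) :
    ∑ q, (phaseWeight z q : ℂ) * Complex.I ^ (q : ℕ) = z := by
  have h_re := posPart_sub_negPart z.re
  have h_im := posPart_sub_negPart z.im
  simp only [posPart_def, negPart_def, max_comm _ (0 : ℝ)] at h_re h_im
  apply Complex.ext <;> simp [phaseWeight, Fin.sum_univ_four, pow_succ] <;> linarith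

variable {κ X : Type*}

/-- The dictionary of all `I ^ q * e k`, together with the zero function, which absorbs the
missing mass when the coefficients of a combination of the `e k` are too small. -/
def phaseDictionary (e : κ → X → ℂ) (i : Option (κ × Fin 4)) (x : X) : ℂ :=
  i.elim 0 fun kq => Complex.I ^ (kq.2 : ℕ) * e kq.1 x

theorem norm_phaseDictionary_le_one {e : κ → X → ℂ} (he : ∀ k x, ‖e k x‖ ≤ 1)
    (i : Option (κ × Fin 4)) (x : X) : ‖phaseDictionary e i x‖ ≤ 1 := by
  cases i with
  | none => simp [phaseDictionary]
  | some kq => simpa [phaseDictionary] using he kq.1 x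

theorem measurable_phaseDictionary [MeasurableSpace X] {e : κ → X → ℂ}
    (he : ∀ k, Measurable (e k)) (i : Option (κ × Fin 4)) : Measurable (phaseDictionary e i) := by
  cases i with
  | none => exact measurable_const
  | some kq => exact (he kq.1).const_mul _

theorem exists_mem_stdSimplex_sum_smul_phaseDictionary [Fintype κ] {a : κ → ℂ}
    (ha : ∑ k, ‖a k‖ ≤ 1 / 2) (e : κ → X → ℂ) :
    ∃ w ∈ stdSimplex ℝ (Option (κ × Fin 4)),
      ∀ x, ∑ i, w i • phaseDictionary e i x = ∑ k, a k * e k x := by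
  have h_mass : ∑ kq : κ × Fin 4, phaseWeight (a kq.1) kq.2 ≤ 1 := by
    calc ∑ kq : κ × Fin 4, phaseWeight (a kq.1) kq.2 = ∑ k, (|(a k).re| + |(a k).im|) := by
          simp only [Fintype.sum_prod_type, sum_phaseWeight_eq_abs_add_abs]
      _ ≤ ∑ k, 2 * ‖a k‖ := sum_le_sum fun k _ => by
          linarith [Complex.abs_re_le_norm (a k), Complex.abs_im_le_norm (a k)]
      _ ≤ 1 := by
          rw [← mul_sum]
          linarith
  refine ⟨fun i => i.elim (1 - ∑ kq : κ × Fin 4, phaseWeight (a kq.1) kq.2)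
    fun kq => phaseWeight (a kq.1) kq.2, ⟨fun i => ?_, ?_⟩, fun x => ?_⟩
  · cases i with
    | none => exact sub_nonneg.2 h_mass
    | some kq => exact phaseWeight_nonneg _ _
  · simp [Fintype.sum_option]
  · calc _ = ∑ k, (∑ q, (phaseWeight (a k) q : ℂ) * Complex.I ^ (q : ℕ)) * e k x := by
          simp [Fintype.sum_option, Fintype.sum_prod_type, phaseDictionary, sum_mul, mul_assoc]
      _ = ∑ k, a k * e k x := by simp only [sum_phaseWeight_mul_I_pow]

end Phases

section HittingSets

variable {X : Type*} [MeasurableSpace X] {μ : Measure X} [IsProbabilityMeasure μ]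

theorem measure_pi_univ_pi_compl_le {B : Set X} (hB : MeasurableSet B) {β : ℝ}
    (hβ : β ≤ μ.real B) (n : ℕ) :
    (Measure.pi fun _ : Fin n => μ) (Set.univ.pi fun _ => Bᶜ) ≤
      ENNReal.ofReal (Real.exp (-(n * β))) := by
  have h_compl : μ.real Bᶜ ≤ Real.exp (-β) := by
    rw [measureReal_compl hB, probReal_univ]
    linarith [Real.one_sub_le_exp_neg β]
  rw [Measure.pi_pi, prod_const, card_univ, Fintype.card_fin, ← ofReal_measureReal,
    ← ENNReal.ofReal_pow measureReal_nonneg, ← mul_neg, Real.exp_nat_mul]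
  exact ENNReal.ofReal_le_ofReal (pow_le_pow_left₀ measureReal_nonneg h_compl n)

theorem exists_forall_exists_mem_of_sum_exp_lt_one {ι : Type*} [Fintype ι] {S : Set X}
    (hS : ∀ᵐ x ∂μ, x ∈ S) {B : ι → Set X} (hB : ∀ i, MeasurableSet (B i)) (β : ι → ℝ) {n : ℕ}
    (h_sum : ∑ i, Real.exp (-(n * β i)) < 1) :
    ∃ x : Fin n → X, (∀ j, x j ∈ S) ∧ ∀ i, β i ≤ μ.real (B i) → ∃ j, x j ∈ B i := by
  set P := Measure.pi fun _ : Fin n => μ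
  have h_missed :
      P (⋃ i ∈ {i | β i ≤ μ.real (B i)}, Set.univ.pi fun _ => (B i)ᶜ) < 1 := by
    calc P (⋃ i ∈ {i | β i ≤ μ.real (B i)}, Set.univ.pi fun _ => (B i)ᶜ)
        ≤ ∑ i, P (⋃ (_ : β i ≤ μ.real (B i)), Set.univ.pi fun _ => (B i)ᶜ) :=
          measure_iUnion_fintype_le _ _
      _ ≤ ∑ i, ENNReal.ofReal (Real.exp (-(n * β i))) := sum_le_sum fun i _ => by
          by_cases hi : β i ≤ μ.real (B i)
          · simpa only [hi, Set.iUnion_true] using measure_pi_univ_pi_compl_le (hB i) hi n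
          · simp [hi]
      _ < 1 := by
          rwa [← ENNReal.ofReal_sum_of_nonneg fun i _ => (Real.exp_pos _).le,
            ENNReal.ofReal_lt_one]
  have h_mem : ∀ᵐ x ∂P, ∀ j, x j ∈ S :=
    ae_all_iff.2 fun j => (Measure.quasiMeasurePreserving_eval _ j).ae hS
  by_contra! h_none
  refine h_missed.not_ge ?_
  rw [← measure_univ (μ := P)]
  refine measure_mono_ae (h_mem.mono fun x hx _ => ?_)
  obtain ⟨i, hi, h_avoid⟩ := h_none x hx
  exact Set.mem_biUnion hi fun j _ => h_avoid j

end HittingSets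

section LevelSets

variable {ι X : Type*} [MeasurableSpace X] {μ : Measure X}

theorem forall_notMem_and_measureReal_le_of_sum_dirac_add_smul_lt_one {n : ℕ} {x : Fin n → X}
    {c : ℝ} (hc : 0 < c) {A : Set X}
    (hA : (∑ i, Measure.dirac (x i) + ENNReal.ofReal c • μ) A < 1) :
    (∀ i, x i ∉ A) ∧ μ.real A ≤ 1 / c := by
  constructor
  · refine fun i hi => hA.not_ge ?_
    calc 1 = Measure.dirac (x i) A := (Measure.dirac_apply_of_mem hi).symm
      _ ≤ (∑ j, Measure.dirac (x j)) A := by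
          rw [Measure.finsetSum_apply]
          exact single_le_sum (f := fun j => Measure.dirac (x j) A) (fun _ _ => zero_le)
            (mem_univ i)
      _ ≤ (∑ j, Measure.dirac (x j) + ENNReal.ofReal c • μ) A := Measure.le_add_right le_rfl A
  · have h_le : ENNReal.ofReal c * μ A ≤ 1 := (Measure.le_add_left le_rfl A).trans hA.le
    rw [le_div_iff₀' hc, ← ENNReal.toReal_ofReal hc.le, measureReal_def, ← ENNReal.toReal_mul]
    exact ENNReal.toReal_mono ENNReal.one_ne_top h_le

variable [Fintype ι] [IsProbabilityMeasure μ]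

theorem exists_empiricalMean_lt_and_measureReal_le {U : ι → X → ℂ} (hU : ∀ i, Measurable (U i))
    (h_bound : ∀ i x, ‖U i x‖ ≤ 1) {w : ι → ℝ} (hw : w ∈ stdSimplex ℝ ι) {n : ℕ} {x : Fin n → X}
    {h : X → ℂ} (h_zero : ∀ i, h (x i) = 0) {t : ℝ} (ht : 0 ≤ t)
    (h_approx : ∀ y, ‖h y - ∑ i, w i • U i y‖ ≤ t / 4) {m : ℕ} (hm : 0 < m) {c : ℝ} (hc : 0 < c)
    (h_small : 4 * Real.exp (-(m * t ^ 2 / 64)) * (n + c) < 1) :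
    ∃ τ : Fin m → ι, (∀ i, ‖empiricalMean U τ (x i)‖ < t / 2) ∧
      μ.real {y | t ≤ ‖h y‖} ≤ μ.real {y | t / 2 ≤ ‖empiricalMean U τ y‖} + 1 / c := by
  set ν : Measure X := ∑ i, Measure.dirac (x i) + ENNReal.ofReal c • μ
  have h_mass : ν Set.univ = ENNReal.ofReal (n + c) := by
    simp [ν, ENNReal.ofReal_add (Nat.cast_nonneg n) hc.le]
  have : IsFiniteMeasure ν := ⟨h_mass ▸ ENNReal.ofReal_lt_top⟩
  obtain ⟨τ, hτ⟩ := exists_measure_le_norm_empiricalMean_sub_sum_lt_one hw ν hU h_bound hm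
    (r := t / 4) (by positivity) <| by
      rw [measureReal_def, h_mass, ENNReal.toReal_ofReal (by positivity)]
      convert h_small using 5
      ring
  set bad := {y | t / 4 ≤ ‖empiricalMean U τ y - ∑ i, w i • U i y‖}
  have h_close {y : X} (hy : y ∉ bad) : ‖empiricalMean U τ y - h y‖ < t / 2 := by
    have h_tri := norm_sub_le (empiricalMean U τ y - ∑ i, w i • U i y)
      (h y - ∑ i, w i • U i y)
    rw [sub_sub_sub_cancel_right] at h_tri
    have h_far : ‖empiricalMean U τ y - ∑ i, w i • U i y‖ < t / 4 := not_le.1 hy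
    linarith [h_approx y]
  obtain ⟨h_sample, h_bad⟩ :=
    forall_notMem_and_measureReal_le_of_sum_dirac_add_smul_lt_one hc hτ
  refine ⟨τ, fun i => by simpa only [h_zero, sub_zero] using h_close (h_sample i), ?_⟩
  have h_sub : {y | t ≤ ‖h y‖} ⊆ {y | t / 2 ≤ ‖empiricalMean U τ y‖} ∪ bad := by
    refine fun y hy => or_iff_not_imp_right.2 fun hy_bad => ?_
    have hy' : t ≤ ‖h y‖ := hy
    rw [Set.mem_ofPred_eq]
    linarith [h_close hy_bad, norm_le_norm_add_norm_sub (empiricalMean U τ y) (h y)]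
  linarith [(measureReal_mono (μ := μ) h_sub).trans (measureReal_union_le _ _)]

/-- The number of dictionary members averaged at scale `2 ^ (-(j + 1))`: large enough for the
failure probability of Maurey's method at this scale to be of order `exp (-k)`. -/
def atomCount (k j : ℕ) : ℕ := 64 * k * 4 ^ (j + 1)

theorem atomCount_mul_sq_div (k j : ℕ) :
    (atomCount k j : ℝ) * ((1 / 2) ^ (j + 1)) ^ 2 / 64 = k := by
  have h_pow : (4 : ℝ) ^ (j + 1) * ((1 / 2) ^ (j + 1)) ^ 2 = 1 := by
    rw [← pow_mul, mul_comm (j + 1) 2, pow_mul, ← mul_pow]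
    norm_num
  rw [atomCount]
  push_cast
  linear_combination (k : ℝ) * h_pow

theorem sum_exp_neg_lt_one_of_atomCount (ι : Type*) [Fintype ι] [Nonempty ι] {J k n : ℕ} {c : ℝ}
    (hc : 0 < c) (h_large : c * (64 * k * Real.log (Fintype.card ι) + J) ≤ n) :
    ∑ q : Σ j : Fin J, (Fin (atomCount k j) → ι), Real.exp (-(n * (4 ^ (q.1 + 1 : ℕ) / c))) <
      1 := by
  have h_scale (j : Fin J) :
      ∑ _ : Fin (atomCount k j) → ι, Real.exp (-(n * (4 ^ (j + 1 : ℕ) / c))) ≤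
        Real.exp (-J) := by
    have h_card : ((Fintype.card (Fin (atomCount k j) → ι) : ℕ) : ℝ) =
        Real.exp (atomCount k j * Real.log (Fintype.card ι)) := by
      rw [Real.exp_nat_mul, Real.exp_log (by exact_mod_cast Fintype.card_pos)]
      simp
    rw [sum_const, card_univ, nsmul_eq_mul, h_card, ← Real.exp_add, Real.exp_le_exp, atomCount]
    have h_le : 64 * k * Real.log (Fintype.card ι) + J ≤ n / c := (le_div_iff₀' hc).2 h_large
    have h_one : (1 : ℝ) ≤ 4 ^ (j + 1 : ℕ) := one_le_pow₀ (by norm_num)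
    have h_mul := mul_le_mul_of_nonneg_left h_le (zero_le_one.trans h_one)
    have h_J := mul_le_mul_of_nonneg_right h_one (Nat.cast_nonneg (α := ℝ) J)
    push_cast
    linear_combination h_mul + h_J
  rw [Fintype.sum_sigma]
  calc ∑ j : Fin J, ∑ _ : Fin (atomCount k j) → ι, Real.exp (-(n * (4 ^ (j + 1 : ℕ) / c)))
      ≤ J * Real.exp (-J) := by
        simpa using sum_le_sum fun j (_ : j ∈ univ) => h_scale j
    _ < 1 := by
        rw [Real.exp_neg, ← div_eq_mul_inv, div_lt_one (Real.exp_pos _)]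
        linarith [Real.add_one_le_exp (J : ℝ)]

theorem exists_points_forall_measureReal_levelSet_le [Nonempty ι] {U : ι → X → ℂ}
    (hU : ∀ i, Measurable (U i)) (h_bound : ∀ i x, ‖U i x‖ ≤ 1) {S : Set X}
    (hS : ∀ᵐ x ∂μ, x ∈ S) {J k n : ℕ} (hk : 0 < k) {c : ℝ} (hc : 0 < c)
    (h_small : 4 * Real.exp (-k) * (n + c) < 1)
    (h_large : c * (64 * k * Real.log (Fintype.card ι) + J) ≤ n) :
    ∃ x : Fin n → X, (∀ i, x i ∈ S) ∧ ∀ h : X → ℂ, ∀ w ∈ stdSimplex ℝ ι,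
      (∀ i, h (x i) = 0) → (∀ y, ‖h y - ∑ i, w i • U i y‖ ≤ (1 / 2) ^ J / 4) →
        ∀ j < J, μ.real {y | (1 / 2) ^ (j + 1) ≤ ‖h y‖} ≤ 4 ^ (j + 1) * (2 / c) := by
  obtain ⟨x, hxS, hx⟩ := exists_forall_exists_mem_of_sum_exp_lt_one hS
    (B := fun q : Σ j : Fin J, (Fin (atomCount k j) → ι) =>
      {y | (1 / 2 : ℝ) ^ (q.1 + 1 : ℕ) / 2 ≤ ‖empiricalMean U q.2 y‖})
    (fun q => measurableSet_le measurable_const (measurable_empiricalMean hU q.2).norm)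
    (fun q => 4 ^ (q.1 + 1 : ℕ) / c) (sum_exp_neg_lt_one_of_atomCount ι hc h_large)
  refine ⟨x, hxS, fun h w hw h_zero h_approx j hj => ?_⟩
  have h_scale : (1 / 2 : ℝ) ^ J ≤ (1 / 2) ^ (j + 1) :=
    pow_le_pow_of_le_one (by norm_num) (by norm_num) hj
  obtain ⟨τ, h_lt, h_le⟩ := exists_empiricalMean_lt_and_measureReal_le (μ := μ) hU h_bound hw
    h_zero (t := (1 / 2) ^ (j + 1)) (by positivity) (fun y => (h_approx y).trans (by linarith))
    (m := atomCount k j) (by unfold atomCount; positivity) hc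
    (by rwa [atomCount_mul_sq_div])
  have h_emp : μ.real {y | (1 / 2 : ℝ) ^ (j + 1) / 2 ≤ ‖empiricalMean U τ y‖} <
      4 ^ (j + 1) / c := by
    by_contra! h_ge
    obtain ⟨i, hi⟩ := hx ⟨⟨j, hj⟩, τ⟩ h_ge
    exact (h_lt i).not_ge hi
  have h_inv : 1 / c ≤ 4 ^ (j + 1) / c := by
    gcongr
    exact one_le_pow₀ (by norm_num)
  linear_combination h_le + h_emp + h_inv

end LevelSets

section LayerCake

theorem sq_le_pow_add_sum_levels {y : ℝ} (hy : y ∈ Set.Icc (0 : ℝ) 1) (J : ℕ) :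
    y ^ 2 ≤ (1 / 4) ^ J + ∑ j ∈ range J, if (1 / 2) ^ (j + 1) ≤ y then (1 / 4) ^ j else 0 := by
  induction J with
  | zero => simpa using pow_le_one₀ (n := 2) hy.1 hy.2
  | succ J ih =>
    rw [sum_range_succ]
    split_ifs with h_level
    · linarith [show (0 : ℝ) < (1 / 4) ^ (J + 1) by positivity]
    · have h_nonneg :
          0 ≤ ∑ j ∈ range J, if (1 / 2) ^ (j + 1) ≤ y then (1 / 4 : ℝ) ^ j else 0 :=
        sum_nonneg fun j _ => by positivity
      have h_sq : y ^ 2 ≤ ((1 / 2) ^ (J + 1)) ^ 2 :=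
        pow_le_pow_left₀ hy.1 (not_le.1 h_level).le 2
      rw [← pow_mul, mul_comm (J + 1), pow_mul] at h_sq
      norm_num at h_sq ⊢
      linarith

variable {X E : Type*} [MeasurableSpace X] [NormedAddCommGroup E] {μ : Measure X} {h : X → E}

theorem integral_norm_sq_le_of_measureReal_levelSet_le [IsProbabilityMeasure μ]
    (h_meas : StronglyMeasurable h) (h_bound : ∀ x, ‖h x‖ ≤ 1) {J : ℕ} {δ : ℝ}
    (h_level : ∀ j < J, μ.real {x | (1 / 2) ^ (j + 1) ≤ ‖h x‖} ≤ 4 ^ (j + 1) * δ) :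
    ∫ x, ‖h x‖ ^ 2 ∂μ ≤ (1 / 4) ^ J + 4 * J * δ := by
  set T : ℕ → Set X := fun j => {x | (1 / 2) ^ (j + 1) ≤ ‖h x‖}
  have hT (j : ℕ) : MeasurableSet (T j) :=
    measurableSet_le measurable_const h_meas.norm.measurable
  have h_int (j : ℕ) : Integrable ((T j).indicator fun _ => (1 / 4 : ℝ) ^ j) μ :=
    (integrable_const _).indicator (hT j)
  have h_term {j : ℕ} (hj : j ∈ range J) :
      ∫ x, (T j).indicator (fun _ => (1 / 4 : ℝ) ^ j) x ∂μ ≤ 4 * δ := by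
    rw [integral_indicator_const _ (hT j), smul_eq_mul]
    have h_pow : (4 : ℝ) ^ j * (1 / 4) ^ j = 1 := by rw [← mul_pow]; norm_num
    calc μ.real (T j) * (1 / 4) ^ j ≤ 4 ^ (j + 1) * δ * (1 / 4) ^ j :=
          mul_le_mul_of_nonneg_right (h_level j (mem_range.1 hj)) (by positivity)
      _ = 4 * δ := by linear_combination 4 * δ * h_pow
  calc ∫ x, ‖h x‖ ^ 2 ∂μ
      ≤ ∫ x, ((1 / 4) ^ J + ∑ j ∈ range J, (T j).indicator (fun _ => (1 / 4 : ℝ) ^ j) x) ∂μ := by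
        refine integral_mono_of_nonneg (.of_forall fun x => by positivity)
          ((integrable_const _).add (integrable_finsetSum _ fun j _ => h_int j))
          (.of_forall fun x => ?_)
        exact sq_le_pow_add_sum_levels ⟨norm_nonneg _, h_bound x⟩ J
    _ = (1 / 4) ^ J + ∑ j ∈ range J, ∫ x, (T j).indicator (fun _ => (1 / 4 : ℝ) ^ j) x ∂μ := by
        rw [integral_add (integrable_const _) (integrable_finsetSum _ fun j _ => h_int j),
          integral_finsetSum _ fun j _ => h_int j]
        simp
    _ ≤ (1 / 4) ^ J + ∑ j ∈ range J, 4 * δ := by gcongr with j hj; exact h_term hj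
    _ = (1 / 4) ^ J + 4 * J * δ := by
        rw [sum_const, card_range, nsmul_eq_mul]
        ring

theorem eLpNorm_le_of_rpow_mul_integral_norm_sq_le [IsFiniteMeasure μ] {p : ℝ} (hp : 2 ≤ p)
    (h_meas : AEStronglyMeasurable h μ) {B : ℝ} (h_bound : ∀ x, ‖h x‖ ≤ B) {ε : ℝ} (hε : 0 ≤ ε)
    (h_sq : B ^ (p - 2) * ∫ x, ‖h x‖ ^ 2 ∂μ ≤ ε ^ p) :
    eLpNorm h (ENNReal.ofReal p) μ ≤ ENNReal.ofReal ε := by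
  have hp_pos : 0 < p := by linarith
  have h_pointwise (x : X) : ‖h x‖ ^ p ≤ B ^ (p - 2) * ‖h x‖ ^ 2 := by
    rw [← Real.rpow_two, ← sub_add_cancel p 2,
      Real.rpow_add_of_nonneg (norm_nonneg _) (by linarith) zero_le_two, add_sub_cancel_right]
    gcongr
    exact h_bound x
  have h_sq_int : Integrable (fun x => ‖h x‖ ^ 2) μ :=
    (MemLp.of_bound h_meas B (.of_forall h_bound) : MemLp h 2 μ).integrable_norm_pow two_ne_zero
  have h_integral : ∫ x, ‖h x‖ ^ p ∂μ ≤ ε ^ p := by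
    refine (integral_mono_of_nonneg (.of_forall fun x => by positivity)
      (h_sq_int.const_mul _) (.of_forall h_pointwise)).trans ?_
    rwa [integral_const_mul]
  rw [(MemLp.of_bound h_meas B (.of_forall h_bound)).eLpNorm_eq_integral_rpow_norm
    (by simpa using hp_pos) ENNReal.ofReal_ne_top, ENNReal.toReal_ofReal hp_pos.le]
  exact ENNReal.ofReal_le_ofReal <| (Real.rpow_inv_le_iff_of_pos
    (integral_nonneg fun x => by positivity) hε hp_pos).2 h_integral

end LayerCake

section FourierSeries

variable {d : ℕ} {f : (Fin d → ℝ) → ℂ}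

theorem Periodic1.apply_add_intCast (hf : Periodic1 d f) (x : Fin d → ℝ) (k : Fin d → ℤ) :
    f (fun i => x i + k i) = f x := by
  have h_coord (x : Fin d → ℝ) (i : Fin d) (m : ℤ) :
      f (Function.update x i (x i + m)) = f x := by
    have h_periodic : Function.Periodic (fun t => f (Function.update x i t)) 1 := fun t => by
      simpa using hf (Function.update x i t) i
    simpa using h_periodic.int_mul m (x i)
  suffices h_partial : ∀ S : Finset (Fin d), f (S.piecewise (fun i => x i + k i) x) = f x by
    simpa using h_partial univ
  intro S
  induction S using Finset.induction_on with
  | empty => simp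
  | insert i S hi ih =>
    rw [Finset.piecewise_insert, ← ih, ← h_coord (S.piecewise _ x) i (k i),
      Finset.piecewise_eq_of_notMem S _ _ hi]

theorem mFourier_coe_eq_eK (k : Fin d → ℤ) (x : Fin d → ℝ) :
    UnitAddTorus.mFourier k (fun i => (x i : UnitAddCircle)) = eK d k x := by
  simp only [UnitAddTorus.mFourier, ContinuousMap.coe_mk, fourier_coe_apply, eK,
    ← Complex.exp_sum, mul_sum]
  refine congrArg Complex.exp (sum_congr rfl fun i _ => ?_)
  push_cast
  ring

theorem setOf_forall_mem_Ioc_ae_eq_cube (d : ℕ) :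
    {x : Fin d → ℝ | ∀ i, x i ∈ Set.Ioc ((0 : Fin d → ℝ) i) ((0 : Fin d → ℝ) i + 1)}
      =ᵐ[volume] cube d := by
  have h := Measure.univ_pi_Ioc_ae_eq_Icc (μ := fun _ : Fin d => (volume : Measure ℝ))
    (f := 0) (g := 1)
  have h_cube : cube d = Set.Icc (0 : Fin d → ℝ) 1 := by
    rw [cube, ← Set.pi_univ_Icc]
    rfl
  have h_Ioc : {x : Fin d → ℝ | ∀ i, x i ∈ Set.Ioc ((0 : Fin d → ℝ) i) ((0 : Fin d → ℝ) i + 1)} =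
      Set.univ.pi fun i => Set.Ioc ((0 : Fin d → ℝ) i) ((1 : Fin d → ℝ) i) := by
    ext x
    simp [Set.mem_pi]
  rw [h_Ioc, h_cube]
  exact h

theorem exists_continuousMap_torus_forall_coe_eq (h_cont : Continuous f) (hf : Periodic1 d f) :
    ∃ F : C(UnitAddTorus (Fin d), ℂ),
      ∀ x : Fin d → ℝ, F (fun i => (x i : UnitAddCircle)) = f x := by
  have h_quot : IsOpenQuotientMap fun (x : Fin d → ℝ) i => (x i : UnitAddCircle) :=
    .piMap (f := fun (_ : Fin d) (t : ℝ) => (t : UnitAddCircle))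
      fun _ => QuotientAddGroup.isOpenQuotientMap_mk
  have h_factors : Function.FactorsThrough f fun (x : Fin d → ℝ) i => (x i : UnitAddCircle) := by
    intro x y hxy
    have h_int (i : Fin d) : ∃ m : ℤ, m • (1 : ℝ) = x i - y i := by
      rw [← AddCircle.coe_eq_zero_iff, AddCircle.coe_sub, sub_eq_zero]
      exact congrFun hxy i
    choose k hk using h_int
    rw [← hf.apply_add_intCast y k]
    congr 1 with i
    linear_combination -(hk i) + (zsmul_one (R := ℝ) (k i))
  refine ⟨⟨Function.extend (fun x i => ((x i : ℝ) : UnitAddCircle)) f 0, ?_⟩,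
    fun x => h_factors.extend_apply 0 x⟩
  rwa [h_quot.isQuotientMap.continuous_iff, h_factors.extend_comp]

theorem hasSum_fCoeff_mul_eK (h_cont : Continuous f) (hf : Periodic1 d f)
    (h_summable : Summable fun k => ‖fCoeff d f k‖) (x : Fin d → ℝ) :
    HasSum (fun k => fCoeff d f k * eK d k x) (f x) := by
  obtain ⟨F, hF⟩ := exists_continuousMap_torus_forall_coe_eq h_cont hf
  have h_coeff (k : Fin d → ℤ) : UnitAddTorus.mFourierCoeff F k = fCoeff d f k := by
    rw [UnitAddTorus.mFourierCoeff_eq_integral _ _ (0 : Fin d → ℝ), fCoeff,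
      setIntegral_congr_set (setOf_forall_mem_Ioc_ae_eq_cube d)]
    congr 1 with x
    rw [mFourier_coe_eq_eK, hF, eK, smul_eq_mul, mul_comm]
    simp
  have h_sum := UnitAddTorus.hasSum_mFourier_series_apply_of_summable
    (f := F) (by simpa only [funext h_coeff] using h_summable.of_norm)
    fun i => (x i : UnitAddCircle)
  simpa only [h_coeff, mFourier_coe_eq_eK, smul_eq_mul, hF] using h_sum

theorem norm_eK (k : Fin d → ℤ) (x : Fin d → ℝ) : ‖eK d k x‖ = 1 := by
  have h_exponent : 2 * π * Complex.I * ∑ i, (k i : ℂ) * (x i : ℂ) =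
      ((2 * π * ∑ i, (k i : ℝ) * x i : ℝ) : ℂ) * Complex.I := by
    push_cast
    ring
  rw [eK, h_exponent, Complex.norm_exp_ofReal_mul_I]

theorem continuous_eK (k : Fin d → ℤ) : Continuous (eK d k) := by
  unfold eK
  fun_prop

theorem measurableSet_cube (d : ℕ) : MeasurableSet (cube d) :=
  .univ_pi fun _ => measurableSet_Icc

instance isProbabilityMeasure_restrict_cube (d : ℕ) :
    IsProbabilityMeasure (volume.restrict (cube d)) :=
  ⟨by rw [Measure.restrict_apply_univ, cube, volume_pi_pi]; simp⟩

end FourierSeries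

section Truncation

theorem summable_inv_max_one_abs_rpow {b : ℝ} (hb : 1 < b) :
    Summable fun k : ℤ => (max 1 (|(k : ℝ)| ^ b))⁻¹ := by
  refine (summable_congr_cofinite ?_).2 (Real.summable_abs_int_rpow hb)
  filter_upwards [(Set.finite_singleton (0 : ℤ)).compl_mem_cofinite] with k hk
  have h_one : (1 : ℝ) ≤ |(k : ℝ)| := by exact_mod_cast Int.one_le_abs hk
  rw [max_eq_right (Real.one_le_rpow h_one (by linarith)), Real.rpow_neg (abs_nonneg _)]

theorem max_one_rpow_add {x a b : ℝ} (hx : 0 ≤ x) (ha : 0 ≤ a) (hb : 0 ≤ b) :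
    max 1 (x ^ (a + b)) = max 1 (x ^ a) * max 1 (x ^ b) := by
  rw [Real.rpow_add_of_nonneg hx ha hb]
  rcases le_total x 1 with h | h
  · have h_a := Real.rpow_le_one hx h ha
    have h_b := Real.rpow_le_one hx h hb
    rw [max_eq_left h_a, max_eq_left h_b, mul_one,
      max_eq_left (mul_le_one₀ h_a (Real.rpow_nonneg hx b) h_b)]
  · have h_a := Real.one_le_rpow h ha
    have h_b := Real.one_le_rpow h hb
    rw [max_eq_right h_a, max_eq_right h_b, max_eq_right (one_le_mul_of_one_le_of_one_le h_a h_b)]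

theorem sum_prod_apply_le_tsum_pow {ι α : Type*} [Fintype ι] {z : α → ℝ}
    (hz : ∀ a, 0 ≤ z a) (h_summable : Summable z) (T : Finset (ι → α)) :
    ∑ k ∈ T, ∏ i, z (k i) ≤ (∑' a, z a) ^ Fintype.card ι := by
  classical
  set S : Finset α := T.biUnion fun k => univ.image k
  have hTS : T ⊆ Fintype.piFinset fun _ : ι => S := fun k hk => Fintype.mem_piFinset.2 fun i =>
    mem_biUnion.2 ⟨k, hk, mem_image_of_mem k (mem_univ i)⟩
  calc ∑ k ∈ T, ∏ i, z (k i) ≤ ∑ k ∈ Fintype.piFinset fun _ : ι => S, ∏ i, z (k i) :=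
        sum_le_sum_of_subset_of_nonneg hTS fun k _ _ => prod_nonneg fun i _ => hz _
    _ = (∑ a ∈ S, z a) ^ Fintype.card ι := by
        rw [sum_prod_piFinset, prod_const, card_univ]
    _ ≤ (∑' a, z a) ^ Fintype.card ι :=
        pow_le_pow_left₀ (sum_nonneg fun a _ => hz a)
          (h_summable.sum_le_tsum S fun a _ => hz a) _

/-- The frequencies `k ∈ ℤ^d` with `‖k‖_∞ ≤ M`. -/
def frequencyBox (d M : ℕ) : Finset (Fin d → ℤ) :=
  Fintype.piFinset fun _ => Finset.Icc (-(M : ℤ)) M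

theorem card_frequencyBox (d M : ℕ) : #(frequencyBox d M) = (2 * M + 1) ^ d := by
  rw [frequencyBox, Fintype.card_piFinset_const, Int.card_Icc]
  congr 1
  omega

/-- The value `∑_{k ∈ ℤ} max(1, |k|^(s + 1/2))⁻¹`; its `d`-th power bounds the sum of the inverse
weights over `ℤ^d` that remains after the decay `M ^ (1/2 - s)` has been extracted from the
frequencies outside a box. -/
def inverseWeightSum (s : ℝ) : ℝ := ∑' k : ℤ, (max 1 (|(k : ℝ)| ^ (s + 1 / 2)))⁻¹

theorem inverseWeightSum_nonneg (s : ℝ) : 0 ≤ inverseWeightSum s :=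
  tsum_nonneg fun _ => by positivity

variable {s : ℝ} {d M : ℕ}

theorem wMix_pos (s : ℝ) (k : Fin d → ℤ) : 0 < wMix s d k :=
  prod_pos fun _ _ => by positivity

theorem rpow_mul_prod_le_wMix (hs : 1 / 2 ≤ s) {k : Fin d → ℤ} (hk : k ∉ frequencyBox d M) :
    (M : ℝ) ^ (s - 1 / 2) * ∏ i, max 1 (|(k i : ℝ)| ^ (s + 1 / 2)) ≤ wMix s d k := by
  obtain ⟨i, hi⟩ : ∃ i, (M : ℤ) < |k i| := by
    contrapose! hk
    exact Fintype.mem_piFinset.2 fun i => Finset.mem_Icc.2 (abs_le.1 (hk i))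
  have h_decay : (M : ℝ) ^ (s - 1 / 2) ≤ ∏ i, max 1 (|(k i : ℝ)| ^ (s - 1 / 2)) := by
    simp only [max_comm (1 : ℝ)]
    exact (Real.rpow_le_rpow (Nat.cast_nonneg M) (by exact_mod_cast hi.le) (by linarith)).trans
      (le_prod_max_one (mem_univ i) fun i => |(k i : ℝ)| ^ (s - 1 / 2))
  have h_factor (i : Fin d) : max 1 (|(k i : ℝ)| ^ (2 * s)) =
      max 1 (|(k i : ℝ)| ^ (s - 1 / 2)) * max 1 (|(k i : ℝ)| ^ (s + 1 / 2)) := by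
    rw [← max_one_rpow_add (abs_nonneg _) (by linarith) (by linarith)]
    ring_nf
  simp only [wMix, h_factor, prod_mul_distrib]
  exact mul_le_mul_of_nonneg_right h_decay (prod_nonneg fun _ _ => by positivity)

theorem sum_inv_wMix_le (hs : 1 / 2 < s) (hM : 0 < M) {T : Finset (Fin d → ℤ)}
    (hT : Disjoint T (frequencyBox d M)) :
    ∑ k ∈ T, (wMix s d k)⁻¹ ≤ ((M : ℝ) ^ (s - 1 / 2))⁻¹ * inverseWeightSum s ^ d := by
  have h_term {k : Fin d → ℤ} (hk : k ∈ T) : (wMix s d k)⁻¹ ≤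
      ((M : ℝ) ^ (s - 1 / 2))⁻¹ * ∏ i, (max 1 (|(k i : ℝ)| ^ (s + 1 / 2)))⁻¹ := by
    rw [prod_inv_distrib, ← mul_inv]
    exact inv_anti₀ (by positivity) (rpow_mul_prod_le_wMix hs.le (disjoint_left.1 hT hk))
  have h_prod := sum_prod_apply_le_tsum_pow (z := fun k : ℤ => (max 1 (|(k : ℝ)| ^ (s + 1 / 2)))⁻¹)
    (fun k => by positivity) (summable_inv_max_one_abs_rpow (by linarith)) T
  rw [Fintype.card_fin] at h_prod
  refine (sum_le_sum fun k hk => h_term hk).trans ?_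
  rw [← mul_sum]
  exact mul_le_mul_of_nonneg_left h_prod (by positivity)

theorem norm_sub_sum_le_of_forall_disjoint {α E : Type*} [SeminormedAddCommGroup E] {u : α → E}
    {y : E} (hu : HasSum u y) {B : Finset α} {η : ℝ}
    (h_tail : ∀ T, Disjoint T B → ∑ k ∈ T, ‖u k‖ ≤ η) : ‖y - ∑ k ∈ B, u k‖ ≤ η := by
  classical
  refine le_of_tendsto (hu.sub_const (∑ k ∈ B, u k)).norm ?_
  filter_upwards [Filter.eventually_ge_atTop B] with T hT
  rw [← sum_sdiff hT, add_sub_cancel_right]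
  exact (norm_sum_le _ _).trans (h_tail _ sdiff_disjoint)

theorem norm_sub_sum_frequencyBox_le (hs : 1 / 2 < s) (hM : 0 < M) {f : (Fin d → ℝ) → ℂ}
    (hf : f ∈ Fmix s d) {η : ℝ} (hη : 0 ≤ η)
    (h_tail : ((M : ℝ) ^ (s - 1 / 2))⁻¹ * inverseWeightSum s ^ d ≤ η ^ 2) (x : Fin d → ℝ) :
    ‖f x - ∑ k ∈ frequencyBox d M, fCoeff d f k * eK d k x‖ ≤ η := by
  obtain ⟨⟨h_cont, h_periodic, h_sq, h_sq_le⟩, h_abs, -⟩ := hf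
  refine norm_sub_sum_le_of_forall_disjoint (hasSum_fCoeff_mul_eK h_cont h_periodic h_abs x)
    fun T hT => ?_
  simp only [norm_mul, norm_eK, mul_one]
  refine le_of_sq_le_sq ?_ hη
  calc (∑ k ∈ T, ‖fCoeff d f k‖) ^ 2
      ≤ (∑ k ∈ T, ‖fCoeff d f k‖ ^ 2 * wMix s d k) * ∑ k ∈ T, (wMix s d k)⁻¹ :=
        sum_sq_le_sum_mul_sum_of_sq_le_mul _
          (fun k _ => mul_nonneg (sq_nonneg _) (wMix_pos s k).le)
          (fun k _ => (inv_pos.2 (wMix_pos s k)).le)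
          (fun k _ => (mul_inv_cancel_right₀ (wMix_pos s k).ne' _).ge)
    _ ≤ 1 * η ^ 2 := by
        refine mul_le_mul ?_ ((sum_inv_wMix_le hs hM hT).trans h_tail)
          (sum_nonneg fun k _ => (inv_pos.2 (wMix_pos s k)).le) zero_le_one
        exact (h_sq.sum_le_tsum T fun k _ => mul_nonneg (sq_nonneg _) (wMix_pos s k).le).trans
          h_sq_le
    _ = η ^ 2 := one_mul _

end Truncation

section MixedSmoothness

variable {s : ℝ} {d : ℕ} {f g : (Fin d → ℝ) → ℂ}

theorem norm_le_one_of_mem_Fmix (hf : f ∈ Fmix s d) (x : Fin d → ℝ) : ‖f x‖ ≤ 1 := by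
  obtain ⟨⟨h_cont, h_periodic, -⟩, h_abs, h_abs_le⟩ := hf
  have h_series := hasSum_fCoeff_mul_eK h_cont h_periodic h_abs x
  rw [← h_series.tsum_eq]
  refine (norm_tsum_le_tsum_norm ?_).trans ?_ <;> simpa only [norm_mul, norm_eK, mul_one]

theorem sum_norm_fCoeff_le_one (hf : f ∈ Fmix s d) (B : Finset (Fin d → ℤ)) :
    ∑ k ∈ B, ‖fCoeff d f k‖ ≤ 1 :=
  (hf.2.1.sum_le_tsum B fun _ _ => norm_nonneg _).trans hf.2.2

theorem norm_sub_le_two_of_mem_Fmix (hf : f ∈ Fmix s d) (hg : g ∈ Fmix s d) (x : Fin d → ℝ) :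
    ‖f x - g x‖ ≤ 2 := by
  linarith [norm_sub_le (f x) (g x), norm_le_one_of_mem_Fmix hf x, norm_le_one_of_mem_Fmix hg x]

theorem exists_mem_stdSimplex_norm_sub_sum_phaseDictionary_le (hf : f ∈ Fmix s d)
    (hg : g ∈ Fmix s d) {B : Finset (Fin d → ℤ)} {η : ℝ}
    (h_tail : ∀ u ∈ Fmix s d, ∀ x, ‖u x - ∑ k ∈ B, fCoeff d u k * eK d k x‖ ≤ η) :
    ∃ w ∈ stdSimplex ℝ (Option (B × Fin 4)), ∀ x,
      ‖(f x - g x) / 4 - ∑ i, w i • phaseDictionary (fun k : B => eK d k) i x‖ ≤ η / 2 := by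
  have h_coeff : ∑ k : B, ‖(fCoeff d f k - fCoeff d g k) / 4‖ ≤ 1 / 2 := by
    have h_sum := add_le_add (sum_norm_fCoeff_le_one hf B) (sum_norm_fCoeff_le_one hg B)
    rw [← sum_add_distrib] at h_sum
    rw [sum_coe_sort B fun k => ‖(fCoeff d f k - fCoeff d g k) / 4‖]
    simp only [norm_div, Complex.norm_ofNat, ← sum_div]
    linarith [sum_le_sum fun k (_ : k ∈ B) => norm_sub_le (fCoeff d f k) (fCoeff d g k)]
  obtain ⟨w, hw, h_eq⟩ :=
    exists_mem_stdSimplex_sum_smul_phaseDictionary h_coeff fun k : B => eK d k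
  refine ⟨w, hw, fun x => ?_⟩
  have h_split : (f x - g x) / 4 - ∑ k : B, (fCoeff d f k - fCoeff d g k) / 4 * eK d k x =
      ((f x - ∑ k ∈ B, fCoeff d f k * eK d k x) -
        (g x - ∑ k ∈ B, fCoeff d g k * eK d k x)) / 4 := by
    rw [sum_coe_sort B fun k => (fCoeff d f k - fCoeff d g k) / 4 * eK d k x]
    simp only [div_mul_eq_mul_div, sub_mul, ← sum_div, sum_sub_distrib]
    ring
  rw [h_eq, h_split, norm_div, Complex.norm_ofNat]
  linarith [norm_sub_le (f x - ∑ k ∈ B, fCoeff d f k * eK d k x)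
    (g x - ∑ k ∈ B, fCoeff d g k * eK d k x), h_tail f hf x, h_tail g hg x]

theorem card_option_frequencyBox_prod (d M : ℕ) :
    Fintype.card (Option (frequencyBox d M × Fin 4)) = 4 * (2 * M + 1) ^ d + 1 := by
  rw [Fintype.card_option, Fintype.card_prod, Fintype.card_coe, card_frequencyBox,
    Fintype.card_fin, mul_comm]

theorem exists_points_integral_norm_sub_sq_le (hs : 1 / 2 < s) {d M J k n : ℕ} (hM : 0 < M)
    (hJ : 0 < J) (hk : 0 < k)
    (h_tail : ((M : ℝ) ^ (s - 1 / 2))⁻¹ * inverseWeightSum s ^ d ≤ ((1 / 2) ^ J / 2) ^ 2)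
    (h_small : 4 * exp (-(k : ℝ)) * (n + 8 * J * 4 ^ J) < 1)
    (h_large : 8 * J * 4 ^ J * (64 * k * log (4 * (2 * M + 1) ^ d + 1) + J) ≤ n) :
    ∃ x : Fin n → Fin d → ℝ, (∀ i, x i ∈ cube d) ∧ ∀ f ∈ Fmix s d, ∀ g ∈ Fmix s d,
      (∀ i, f (x i) = g (x i)) →
        ∫ y in cube d, ‖f y - g y‖ ^ 2 ≤ 32 * (1 / 4) ^ J := by
  have hc : (0 : ℝ) < 8 * J * 4 ^ J := by positivity
  have h_card : (Fintype.card (Option (frequencyBox d M × Fin 4)) : ℝ) =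
      4 * (2 * M + 1) ^ d + 1 := by
    exact_mod_cast card_option_frequencyBox_prod d M
  rw [← h_card] at h_large
  obtain ⟨x, hx, h_level⟩ := exists_points_forall_measureReal_levelSet_le
    (μ := volume.restrict (cube d))
    (measurable_phaseDictionary fun k : frequencyBox d M => (continuous_eK k.1).measurable)
    (norm_phaseDictionary_le_one fun k x => (norm_eK k.1 x).le)
    (ae_restrict_mem (measurableSet_cube d)) hk hc h_small h_large
  refine ⟨x, hx, fun f hf g hg h_eq => ?_⟩
  obtain ⟨w, hw, h_approx⟩ := exists_mem_stdSimplex_norm_sub_sum_phaseDictionary_le hf hg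
    fun u hu => norm_sub_sum_frequencyBox_le hs hM hu (by positivity) h_tail
  have h_int := integral_norm_sq_le_of_measureReal_levelSet_le
    (h := fun y => (f y - g y) / 4) (μ := volume.restrict (cube d))
    ((hf.1.1.sub hg.1.1).div_const 4).stronglyMeasurable
    (fun y => by
      rw [norm_div, Complex.norm_ofNat]
      linarith [norm_sub_le_two_of_mem_Fmix hf hg y])
    (h_level _ w hw (fun i => by simp [h_eq i]) fun y => (h_approx y).trans_eq (by ring))
  have h_budget : 4 * (J : ℝ) * (2 / (8 * J * 4 ^ J)) = (1 / 4) ^ J := by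
    rw [one_div_pow]
    field_simp
    norm_num
  rw [h_budget] at h_int
  simp only [norm_div, Complex.norm_ofNat, div_pow, one_pow, integral_div] at h_int ⊢
  linarith

end MixedSmoothness

section SampleSize

theorem exists_forall_inv_rpow_mul_pow_le {γ : ℝ} (hγ : 0 < γ) {Z : ℝ} (hZ : 0 ≤ Z) :
    ∃ b : ℕ, ∀ d J : ℕ, 0 < J →
      (((2 ^ (b * (d + J)) : ℕ) : ℝ) ^ γ)⁻¹ * Z ^ d ≤ ((1 / 2) ^ J / 2) ^ 2 := by
  obtain ⟨b, hb⟩ := pow_unbounded_of_one_lt (max Z 16) (Real.one_lt_rpow one_lt_two hγ)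
  refine ⟨b, fun d J hJ => ?_⟩
  set Q : ℝ := ((2 : ℝ) ^ γ) ^ b with hQ_def
  have h_rpow : ((2 ^ (b * (d + J)) : ℕ) : ℝ) ^ γ = Q ^ (d + J) := by
    rw [hQ_def, ← pow_mul, Nat.cast_pow, Nat.cast_ofNat, Real.rpow_pow_comm zero_le_two]
  have h_four : (4 : ℝ) ≤ 4 ^ J := le_self_pow₀ (by norm_num) hJ.ne'
  rw [h_rpow, inv_mul_le_iff₀ (by positivity), pow_add, mul_assoc]
  calc Z ^ d ≤ Q ^ d * 1 := by
        rw [mul_one]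
        exact pow_le_pow_left₀ hZ ((le_max_left _ _).trans hb.le) d
    _ ≤ Q ^ d * (16 ^ J * ((1 / 2) ^ J / 2) ^ 2) := by
        have h_eq : (16 : ℝ) ^ J * ((1 / 2) ^ J / 2) ^ 2 = 4 ^ J / 4 := by
          rw [div_pow, pow_right_comm, mul_div_assoc', ← mul_pow]
          norm_num
        refine mul_le_mul_of_nonneg_left ?_ (by positivity)
        linarith
    _ ≤ Q ^ d * (Q ^ J * ((1 / 2) ^ J / 2) ^ 2) := by
        gcongr
        exact (le_max_right _ _).trans hb.le

theorem log_four_mul_pow_add_one_le {b d J : ℕ} (hd : 0 < d) (hJ : 0 < J) :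
    log (4 * (2 * ((2 ^ (b * (d + J)) : ℕ) : ℝ) + 1) ^ d + 1) ≤ (2 * b + 5) * d ^ 2 * J := by
  set m := b * (d + J) with hm
  have h_base : 2 * ((2 ^ m : ℕ) : ℝ) + 1 ≤ 2 ^ (m + 2) := by
    have h_one : (1 : ℝ) ≤ 2 ^ m := one_le_pow₀ one_le_two
    rw [pow_add, Nat.cast_pow, Nat.cast_ofNat]
    linarith
  have h_pow : 4 * (2 * ((2 ^ m : ℕ) : ℝ) + 1) ^ d + 1 ≤ 2 ^ ((m + 2) * d + 3) := by
    have h_le := pow_le_pow_left₀ (by positivity) h_base d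
    have h_one : (1 : ℝ) ≤ (2 ^ (m + 2)) ^ d := one_le_pow₀ (one_le_pow₀ one_le_two)
    rw [pow_add, pow_mul (2 : ℝ) (m + 2)]
    linarith
  have h_exponent : (m + 2) * d + 3 ≤ (2 * b + 5) * d ^ 2 * J := by
    have h_d : d ≤ d ^ 2 * J := by nlinarith [Nat.mul_pos hd hJ]
    have h_dJ : d * J ≤ d ^ 2 * J := Nat.mul_le_mul_right J (Nat.le_self_pow two_ne_zero d)
    have h_dd : d ^ 2 ≤ d ^ 2 * J := Nat.le_mul_of_pos_right _ hJ
    calc (m + 2) * d + 3 ≤ b * (d ^ 2 + d * J) + 5 * d := by rw [hm]; nlinarith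
      _ ≤ b * (d ^ 2 * J + d ^ 2 * J) + 5 * (d ^ 2 * J) := by gcongr
      _ = (2 * b + 5) * d ^ 2 * J := by ring
  calc log (4 * (2 * ((2 ^ m : ℕ) : ℝ) + 1) ^ d + 1)
      ≤ log (2 ^ ((m + 2) * d + 3)) := Real.log_le_log (by positivity) h_pow
    _ = ((m + 2) * d + 3 : ℕ) * log 2 := Real.log_pow _ _
    _ ≤ ((m + 2) * d + 3 : ℕ) := mul_le_of_le_one_right (by positivity) (by
        linarith [Real.log_two_lt_d9])
    _ ≤ (2 * b + 5) * d ^ 2 * J := by exact_mod_cast h_exponent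

theorem mul_sq_mul_four_pow_mul_sq_lt_exp {J : ℕ} {A D l k : ℝ} (hA : 0 < A) (hD : 0 ≤ D)
    (hDl : D ≤ exp l) (hl : 0 ≤ l) (hk : k = 2 * (A + 4 * J + 2 * l)) :
    A * k * J ^ 2 * 4 ^ J * D ^ 2 < exp k := by
  have hk_pos : 0 < k := by rw [hk]; positivity
  have h_k : k < exp (k / 2) := by
    have h_mul := Real.exp_one_mul_le_exp (x := k / 2)
    nlinarith [Real.exp_one_gt_d9]
  have h_A : A ≤ exp A := by linarith [Real.add_one_le_exp A]
  have h_J : (J : ℝ) ≤ exp J := by linarith [Real.add_one_le_exp (J : ℝ)]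
  have h_four : (4 : ℝ) ^ J ≤ exp J ^ 2 := by
    rw [← Real.exp_one_pow, ← pow_mul, mul_comm, pow_mul]
    exact pow_le_pow_left₀ (by norm_num) (by nlinarith [Real.exp_one_gt_d9]) J
  have h_half : k / 2 = A + J + J + J + J + l + l := by rw [hk]; ring
  calc A * k * J ^ 2 * 4 ^ J * D ^ 2
      ≤ exp A * k * exp J ^ 2 * exp J ^ 2 * exp l ^ 2 := by gcongr
    _ = k * exp (k / 2) := by
        rw [h_half]
        simp only [Real.exp_add]
        ring
    _ < exp (k / 2) * exp (k / 2) := mul_lt_mul_of_pos_right h_k (Real.exp_pos _)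
    _ = exp k := by rw [← Real.exp_add, add_halves]

theorem ceil_log_add_one_le {d : ℕ} (hd : 0 < d) :
    (⌈log (d + 1)⌉₊ : ℝ) ≤ 3 * log (d + 1) := by
  have h_log : log 2 ≤ log (d + 1) := Real.log_le_log two_pos (by
    have h_one : (1 : ℝ) ≤ d := by exact_mod_cast hd
    linarith)
  have h_ceil := Nat.ceil_lt_add_one ((Real.log_nonneg one_le_two).trans h_log)
  linarith [Real.log_two_gt_d9]

/-- The number of random points that meet, up to dyadic depth `J`, all large superlevel sets of
averages of `k` atoms, where `a * d ^ 2 * J` bounds the logarithm of the number of atoms. -/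
def sampleSize (a d J k : ℕ) : ℕ := 8 * J * 4 ^ J * (64 * k * (a * d ^ 2 * J) + J)

theorem four_mul_sampleSize_add_le {a d J k : ℕ} (ha : 0 < a) (hd : 0 < d) (hJ : 0 < J)
    (hk : 0 < k) :
    4 * (sampleSize a d J k + 8 * J * 4 ^ J) ≤ 2112 * a * k * J ^ 2 * 4 ^ J * d ^ 2 := by
  have h_pos : 0 < k * a * d ^ 2 := by positivity
  have h_succ : J + 1 ≤ 2 * J * (k * a * d ^ 2) := by nlinarith
  calc 4 * (sampleSize a d J k + 8 * J * 4 ^ J)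
      = 32 * J * 4 ^ J * (64 * k * (a * d ^ 2 * J) + (J + 1)) := by rw [sampleSize]; ring
    _ ≤ 32 * J * 4 ^ J * (64 * k * (a * d ^ 2 * J) + 2 * J * (k * a * d ^ 2)) := by gcongr
    _ = 2112 * a * k * J ^ 2 * 4 ^ J * d ^ 2 := by ring

theorem sampleSize_le {a d J k : ℕ} (ha : 0 < a) (hd : 0 < d) (hk : 0 < k) :
    sampleSize a d J k ≤ 520 * a * k * J ^ 2 * 4 ^ J * d ^ 2 := by
  have h_pos : 0 < k * (a * d ^ 2) := by positivity
  have h_J : J ≤ k * (a * d ^ 2 * J) := by nlinarith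
  calc sampleSize a d J k
      ≤ 8 * J * 4 ^ J * (64 * k * (a * d ^ 2 * J) + k * (a * d ^ 2 * J)) := by
        rw [sampleSize]
        gcongr
    _ = 520 * a * k * J ^ 2 * 4 ^ J * d ^ 2 := by ring

theorem exists_sampleSize {a : ℕ} (ha : 0 < a) : ∃ C : ℝ, 0 < C ∧ ∀ d J : ℕ, 0 < d → 0 < J →
    ∃ k n : ℕ, 0 < k ∧ 4 * exp (-(k : ℝ)) * (n + 8 * J * 4 ^ J) < 1 ∧
      8 * J * 4 ^ J * (64 * k * (a * d ^ 2 * J) + J) ≤ (n : ℝ) ∧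
      (n : ℝ) ≤ C * J ^ 3 * 4 ^ J * d ^ 2 * log (d + 1) := by
  refine ⟨520 * a * (2 * (2112 * a + 6)) * 3, by positivity, fun d J hd hJ => ?_⟩
  have h_log_pos : 0 < log ((d : ℝ) + 1) := Real.log_pos (by linarith [Nat.cast_pos (α := ℝ).2 hd])
  set l := ⌈log ((d : ℝ) + 1)⌉₊
  have hl : 0 < l := Nat.ceil_pos.2 h_log_pos
  set k := 2 * (2112 * a + 4 * J + 2 * l) with hk_def
  have hk : 0 < k := by omega
  refine ⟨k, sampleSize a d J k, hk, ?_, by rw [sampleSize]; push_cast; rfl, ?_⟩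
  · have hdl : (d : ℝ) ≤ exp l := by
      linarith [(Real.log_le_iff_le_exp (by positivity)).1 (Nat.le_ceil (log ((d : ℝ) + 1)))]
    have h_exp := mul_sq_mul_four_pow_mul_sq_lt_exp (J := J) (A := 2112 * a) (k := k)
      (by positivity) (Nat.cast_nonneg d) hdl (Nat.cast_nonneg l) (by rw [hk_def]; push_cast; rfl)
    rw [Real.exp_neg, mul_comm (4 : ℝ), mul_assoc, inv_mul_lt_iff₀ (Real.exp_pos _), mul_one]
    exact lt_of_le_of_lt (by exact_mod_cast four_mul_sampleSize_add_le ha hd hJ hk) h_exp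
  · have h_k : k ≤ 2 * (2112 * a + 6) * (J * l) := by
      nlinarith [Nat.le_mul_of_pos_right J hl, Nat.le_mul_of_pos_left l hJ, Nat.mul_pos hJ hl]
    calc (sampleSize a d J k : ℝ)
        ≤ 520 * a * k * J ^ 2 * 4 ^ J * d ^ 2 := by exact_mod_cast sampleSize_le ha hd hk
      _ ≤ 520 * a * (2 * (2112 * a + 6) * (J * (3 * log (d + 1)))) * J ^ 2 * 4 ^ J * d ^ 2 := by
          gcongr
          calc (k : ℝ) ≤ 2 * (2112 * a + 6) * (J * l) := by exact_mod_cast h_k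
            _ ≤ 2 * (2112 * a + 6) * (J * (3 * log (d + 1))) := by
                gcongr
                exact ceil_log_add_one_le hd
      _ = _ := by ring

theorem exists_pos_four_pow_le {p ε : ℝ} (hp : 2 ≤ p) (hε : 0 < ε) (hε_lt : ε < 1 / 2) :
    ∃ J : ℕ, 0 < J ∧ 2 ^ (p - 2) * (32 * (1 / 4) ^ J) ≤ ε ^ p ∧
      4 ^ J ≤ 32 * 2 ^ p * ε ^ (-p) ∧ J ≤ (4 + 2 * p) * log ε⁻¹ := by
  have hεp : 0 < ε ^ p := Real.rpow_pos_of_pos hε p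
  have h_two : (1 : ℝ) ≤ 2 ^ p := Real.one_le_rpow one_le_two (by linarith)
  have h_inv : 1 ≤ ε ^ (-p) := Real.one_le_rpow_of_pos_of_le_one_of_nonpos hε (by linarith)
    (by linarith)
  obtain ⟨m, hm_le, hm_lt⟩ := exists_nat_pow_near (x := 8 * 2 ^ p * ε ^ (-p)) (y := 4)
    (by nlinarith [one_le_mul_of_one_le_of_one_le h_two h_inv]) (by norm_num)
  refine ⟨m + 1, m.succ_pos, ?_, ?_, ?_⟩
  · rw [Real.rpow_sub two_pos, Real.rpow_two, one_div_pow, mul_one_div, mul_div_assoc',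
      div_le_iff₀ (by positivity)]
    rw [Real.rpow_neg hε.le, ← div_eq_mul_inv, div_lt_iff₀ hεp] at hm_lt
    linarith
  · rw [pow_succ]
    linarith
  · have h_half : log 2 ≤ log ε⁻¹ := Real.log_le_log two_pos (by
      rw [le_inv_comm₀ two_pos hε]
      linarith)
    have h_log := Real.log_le_log (by positivity) hm_le
    rw [Real.log_pow, Real.log_mul (by positivity) (by positivity),
      Real.log_mul (by norm_num) (by positivity), Real.log_rpow two_pos, Real.log_rpow hε,
      show (4 : ℝ) = 2 ^ 2 by norm_num, show (8 : ℝ) = 2 ^ 3 by norm_num, Real.log_pow,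
      Real.log_pow] at h_log
    rw [Real.log_inv] at h_half ⊢
    push_cast at h_log ⊢
    nlinarith [Real.log_two_gt_d9, Nat.cast_nonneg (α := ℝ) m]

end SampleSize

section SampleCount

variable {s : ℝ}

theorem exists_card_le_integral_norm_sub_sq_le (hs : 1 / 2 < s) : ∃ C : ℝ, 0 < C ∧
    ∀ d J : ℕ, 0 < d → 0 < J → ∃ n : ℕ, (n : ℝ) ≤ C * J ^ 3 * 4 ^ J * d ^ 2 * log (d + 1) ∧
      ∃ x : Fin n → Fin d → ℝ, (∀ i, x i ∈ cube d) ∧ ∀ f ∈ Fmix s d, ∀ g ∈ Fmix s d,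
        (∀ i, f (x i) = g (x i)) →
          ∫ y in cube d, ‖f y - g y‖ ^ 2 ≤ 32 * (1 / 4) ^ J := by
  obtain ⟨b, h_tail⟩ := exists_forall_inv_rpow_mul_pow_le (sub_pos.2 hs)
    (inverseWeightSum_nonneg s)
  obtain ⟨C, hC, h_size⟩ := exists_sampleSize (show 0 < 2 * b + 5 by omega)
  refine ⟨C, hC, fun d J hd hJ => ?_⟩
  obtain ⟨k, n, hk, h_small, h_large, hn⟩ := h_size d J hd hJ
  refine ⟨n, hn, exists_points_integral_norm_sub_sq_le hs (Nat.two_pow_pos _) hJ hk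
    (h_tail d J hJ) h_small (le_trans ?_ h_large)⟩
  gcongr
  exact_mod_cast log_four_mul_pow_add_one_le hd hJ

end SampleCount

section Algorithms

variable {d n : ℕ} {F : Set ((Fin d → ℝ) → ℂ)} {p ε : ℝ}

/-- `n` sampling points in the cube suffice for worst-case `L_p`-error at most `ε` on the class `F`,
that is, `n(ε, F, L_p) ≤ n`. The map `φ` is arbitrary, so it may be non-linear. -/
def SamplingAttains (d : ℕ) (F : Set ((Fin d → ℝ) → ℂ)) (p ε : ℝ) (n : ℕ) : Prop :=
  ∃ (x : Fin n → (Fin d → ℝ)) (φ : (Fin n → ℂ) → ((Fin d → ℝ) → ℂ)), (∀ i, x i ∈ cube d) ∧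
    ∀ f ∈ F, eLpNorm (fun t => f t - φ (fun i => f (x i)) t) (ENNReal.ofReal p)
      (volume.restrict (cube d)) ≤ ENNReal.ofReal ε

-- Any selection of a function of `F` that interpolates the data is a sampling algorithm.
theorem samplingAttains_of_forall_eLpNorm_sub_le {x : Fin n → Fin d → ℝ} (hx : ∀ i, x i ∈ cube d)
    (h : ∀ f ∈ F, ∀ g ∈ F, (∀ i, f (x i) = g (x i)) →
      eLpNorm (fun t => f t - g t) (ENNReal.ofReal p) (volume.restrict (cube d)) ≤
        ENNReal.ofReal ε) :
    SamplingAttains d F p ε n := by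
  let sample (f : (Fin d → ℝ) → ℂ) : Fin n → ℂ := fun i => f (x i)
  refine ⟨x, Function.invFunOn sample F, hx, fun f hf => ?_⟩
  have h_image : ∃ g ∈ F, sample g = sample f := ⟨f, hf, rfl⟩
  exact h f hf _ (Function.invFunOn_mem h_image) fun i =>
    (congrFun (Function.invFunOn_eq h_image) i).symm

theorem SamplingAttains.mono_error {ε' : ℝ} (h : SamplingAttains d F p ε n) (hε : ε ≤ ε') :
    SamplingAttains d F p ε' n :=
  let ⟨x, φ, hx, hφ⟩ := h
  ⟨x, φ, hx, fun f hf => (hφ f hf).trans (ENNReal.ofReal_le_ofReal hε)⟩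

theorem samplingAttains_zero (h_bound : ∀ f ∈ F, ∀ t, ‖f t‖ ≤ 1) (hε : 1 ≤ ε) :
    SamplingAttains d F p ε 0 := by
  refine ⟨fun i => i.elim0, fun _ => 0, fun i => i.elim0, fun f hf => ?_⟩
  refine (eLpNorm_le_of_ae_bound (C := 1) (Filter.Eventually.of_forall fun t => ?_)).trans ?_
  · simpa only [Pi.zero_apply, sub_zero] using h_bound f hf t
  · rw [measure_univ, ENNReal.one_rpow, one_mul]
    exact ENNReal.ofReal_le_ofReal hε

end Algorithms

section Tractability

variable {s p : ℝ}

theorem exists_card_le_forall_samplingAttains (hs : 1 / 2 < s) (hp : 2 ≤ p) :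
    ∃ C : ℝ, 0 < C ∧ ∀ (d : ℕ) (ε : ℝ), 0 < d → 0 < ε → ε < 1 / 2 →
      ∃ n : ℕ, (n : ℝ) ≤ C * d ^ 2 * log (d + 1) * ε ^ (-p) * log ε⁻¹ ^ 3 ∧
        ∀ q ≤ p, SamplingAttains d (Fmix s d) q ε n := by
  obtain ⟨C, hC, h_points⟩ := exists_card_le_integral_norm_sub_sq_le hs
  have : 0 < 4 + 2 * p := by linarith
  refine ⟨C * (4 + 2 * p) ^ 3 * (32 * 2 ^ p), by positivity, fun d ε hd hε hε_lt => ?_⟩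
  obtain ⟨J, hJ, h_level, h_four, hJ_le⟩ := exists_pos_four_pow_le hp hε hε_lt
  obtain ⟨n, hn, x, hx, h_sq⟩ := h_points d J hd hJ
  have h_log : 0 ≤ log ((d : ℝ) + 1) := Real.log_nonneg (by linarith [Nat.cast_nonneg (α := ℝ) d])
  have h_log_ε : 0 ≤ log ε⁻¹ := Real.log_nonneg ((one_le_inv₀ hε).2 (by linarith))
  refine ⟨n, hn.trans ?_, fun q hq => samplingAttains_of_forall_eLpNorm_sub_le hx
    fun f hf g hg h_eq => ?_⟩
  · calc C * J ^ 3 * 4 ^ J * d ^ 2 * log (d + 1)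
        ≤ C * ((4 + 2 * p) * log ε⁻¹) ^ 3 * (32 * 2 ^ p * ε ^ (-p)) * d ^ 2 * log (d + 1) := by
          gcongr
      _ = _ := by ring
  · have h_cont : Continuous fun t => f t - g t := hf.1.1.sub hg.1.1
    refine (eLpNorm_le_eLpNorm_of_exponent_le (ENNReal.ofReal_le_ofReal hq)
      h_cont.aestronglyMeasurable).trans ?_
    refine eLpNorm_le_of_rpow_mul_integral_norm_sq_le hp h_cont.aestronglyMeasurable
      (norm_sub_le_two_of_mem_Fmix hf hg) hε.le (le_trans ?_ h_level)
    gcongr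
    exact h_sq f hf g hg h_eq

theorem rpow_neg_mul_log_inv_pow_le {r ε : ℝ} (hε : 0 < ε) (hε_le : ε ≤ 1) (m : ℕ) :
    ε ^ (-r) * log ε⁻¹ ^ m ≤ ε ^ (-(r + m)) := by
  have h_log : log ε⁻¹ ^ m ≤ ε ^ (-(m : ℝ)) := by
    rw [Real.rpow_neg hε.le, Real.rpow_natCast, ← inv_pow]
    exact pow_le_pow_left₀ (Real.log_nonneg ((one_le_inv₀ hε).2 hε_le))
      (Real.log_le_self (by positivity)) m
  rw [neg_add, Real.rpow_add hε]
  gcongr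

theorem exists_card_le_rpow_mul_rpow (hs : 1 / 2 < s) (p : ℝ) :
    ∃ C q r : ℝ, 0 ≤ C ∧ 0 ≤ q ∧ 0 ≤ r ∧ ∀ (d : ℕ) (ε : ℝ), 1 ≤ d → 0 < ε →
      ∃ n : ℕ, (n : ℝ) ≤ C * (d : ℝ) ^ q * ε ^ (-r) ∧ SamplingAttains d (Fmix s d) p ε n := by
  obtain ⟨C, hC, h_main⟩ := exists_card_le_forall_samplingAttains hs (le_max_right p 2)
  have hr : 0 ≤ max p 2 + (3 : ℕ) := by positivity
  refine ⟨C * 4 ^ (max p 2 + (3 : ℕ)), (3 : ℕ), max p 2 + (3 : ℕ), by positivity, by positivity, hr,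
    fun d ε hd hε => ?_⟩
  rcases le_or_gt 1 ε with hε_ge | hε_lt
  · exact ⟨0, by rw [Nat.cast_zero]; positivity,
      samplingAttains_zero (fun f hf => norm_le_one_of_mem_Fmix hf) hε_ge⟩
  obtain ⟨n, hn, h_attains⟩ := h_main d (ε / 4) hd (by positivity) (by linarith)
  refine ⟨n, hn.trans ?_, (h_attains p (le_max_left p 2)).mono_error (by linarith)⟩
  have h_log : log ((d : ℝ) + 1) ≤ d := by
    linarith [Real.log_le_sub_one_of_pos (show (0 : ℝ) < d + 1 by positivity)]
  rw [mul_assoc]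
  calc C * d ^ 2 * log (d + 1) * ((ε / 4) ^ (-max p 2) * log (ε / 4)⁻¹ ^ 3)
      ≤ C * d ^ 2 * d * (ε / 4) ^ (-(max p 2 + (3 : ℕ))) := by
        refine mul_le_mul (mul_le_mul_of_nonneg_left h_log (by positivity))
          (rpow_neg_mul_log_inv_pow_le (by positivity) (by linarith) 3) ?_ (by positivity)
        have h_log_nonneg := Real.log_nonneg ((one_le_inv₀ (by positivity)).2
          (by linarith : ε / 4 ≤ 1))
        positivity
    _ = C * 4 ^ (max p 2 + (3 : ℕ)) * (d : ℝ) ^ ((3 : ℕ) : ℝ) * ε ^ (-(max p 2 + (3 : ℕ))) := by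
        rw [Real.rpow_natCast, Real.div_rpow hε.le (by norm_num),
          Real.rpow_neg (by norm_num : (0 : ℝ) ≤ 4), div_inv_eq_mul]
        ring

theorem statement6_general (hs : 1 / 2 < s) (_hp : 0 < p) :
    (∃ C q r : ℝ, 0 ≤ C ∧ 0 ≤ q ∧ 0 ≤ r ∧ ∀ (d : ℕ) (ε : ℝ), 1 ≤ d → 0 < ε →
      ∃ n : ℕ, (n : ℝ) ≤ C * (d : ℝ) ^ q * ε ^ (-r) ∧ SamplingAttains d (Fmix s d) p ε n) ∧
    (2 ≤ p → ∃ C : ℝ, 0 < C ∧ ∀ (d : ℕ) (ε : ℝ), 1 ≤ d → ε ∈ Set.Ioo (0 : ℝ) (1 / 2) →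
      ∃ n : ℕ, (n : ℝ) ≤ C * d ^ 2 * log (d + 1) * ε ^ (-p) * log ε⁻¹ ^ 3 ∧
        SamplingAttains d (Fmix s d) p ε n) := by
  refine ⟨exists_card_le_rpow_mul_rpow hs p, fun hp => ?_⟩
  obtain ⟨C, hC, h_main⟩ := exists_card_le_forall_samplingAttains hs hp
  refine ⟨C, hC, fun d ε hd hε => ?_⟩
  obtain ⟨n, hn, h_attains⟩ := h_main d ε hd hε.1 hε.2
  exact ⟨n, hn, h_attains p le_rfl⟩

theorem log_add_one_mul_log_inv_pow_le {d : ℕ} (hd : 2 ≤ d) {ε : ℝ} (hε : ε ∈ Set.Ioo 0 (1 / 2)) :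
    log (d + 1) * log ε⁻¹ ^ 3 ≤ 4 * (log d * log ε⁻¹ ^ 4) := by
  have hd' : (2 : ℝ) ≤ d := by exact_mod_cast hd
  have h_log_d : log ((d : ℝ) + 1) ≤ 2 * log d := by
    rw [show 2 * log (d : ℝ) = log ((d : ℝ) ^ 2) by rw [Real.log_pow]; norm_num]
    exact Real.log_le_log (by positivity) (by nlinarith)
  have h_log_ε : 1 / 2 ≤ log ε⁻¹ := by
    have h_two := Real.log_le_log two_pos ((le_inv_comm₀ two_pos hε.1).2 (by linarith [hε.2]))
    linarith [Real.log_two_gt_d9]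
  have h_cube : 0 ≤ log ε⁻¹ ^ 3 := pow_nonneg (by linarith) 3
  calc log (d + 1) * log ε⁻¹ ^ 3 ≤ 2 * log d * (log ε⁻¹ ^ 3 * (2 * log ε⁻¹)) := by
        have := Real.log_natCast_nonneg d
        gcongr
        exact le_mul_of_one_le_right h_cube (by linarith)
    _ = 4 * (log d * log ε⁻¹ ^ 4) := by ring

theorem exists_card_le_sq_mul_log_mul_rpow_mul_log_pow (hs : 1 / 2 < s) (hp : 2 ≤ p) :
    ∃ C : ℝ, 0 < C ∧ ∀ (d : ℕ) (ε : ℝ), 2 ≤ d → ε ∈ Set.Ioo (0 : ℝ) (1 / 2) →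
      ∃ n : ℕ, (n : ℝ) ≤ C * d ^ 2 * log d * ε ^ (-p) * log ε⁻¹ ^ 4 ∧
        SamplingAttains d (Fmix s d) p ε n := by
  obtain ⟨C, hC, h_main⟩ := (statement6_general hs (by linarith)).2 hp
  refine ⟨C * 4, by positivity, fun d ε hd hε => ?_⟩
  obtain ⟨n, hn, h_attains⟩ := h_main d ε (by omega) hε
  refine ⟨n, hn.trans ?_, h_attains⟩
  have hε_pow := Real.rpow_pos_of_pos hε.1 (-p)
  calc C * d ^ 2 * log (d + 1) * ε ^ (-p) * log ε⁻¹ ^ 3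
      = C * d ^ 2 * ε ^ (-p) * (log (d + 1) * log ε⁻¹ ^ 3) := by ring
    _ ≤ C * d ^ 2 * ε ^ (-p) * (4 * (log d * log ε⁻¹ ^ 4)) :=
        mul_le_mul_of_nonneg_left (log_add_one_mul_log_inv_pow_le hd hε) (by positivity)
    _ = _ := by ring

end Tractability

/-- Corollary `cor:Sob`: for `s > 1/2` and `1 ≤ p < ∞`, `L_p`-approximation
on `F^{s,d}_mix` is polynomially tractable; more precisely, for `p ≥ 2` there is `C > 0`
(depending only on `s` and `p`) with `n(ε, F^{s,d}_mix, L_p) ≤ C d² log(d) ε^{-p} log⁴(ε⁻¹)`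
for all `d ≥ 2`, `ε ∈ (0,1/2)`. -/
theorem statement6 :
    ∀ (s p : ℝ), 1/2 < s → 1 ≤ p →
      ((∃ C q r : ℝ, 0 ≤ C ∧ 0 ≤ q ∧ 0 ≤ r ∧
        ∀ (d : ℕ) (ε : ℝ), 1 ≤ d → 0 < ε →
          ∃ n : ℕ, (n : ℝ) ≤ C * (d : ℝ) ^ q * ε ^ (-r) ∧
            ∃ (x : Fin n → (Fin d → ℝ)) (φ : (Fin n → ℂ) → ((Fin d → ℝ) → ℂ)),
              (∀ i, x i ∈ cube d) ∧
              ∀ f ∈ Fmix s d,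
                eLpNorm (fun t => f t - φ (fun i => f (x i)) t) (ENNReal.ofReal p)
                    (volume.restrict (cube d)) ≤ ENNReal.ofReal ε) ∧
      (2 ≤ p →
        ∃ C : ℝ, 0 < C ∧
          ∀ (d : ℕ) (ε : ℝ), 2 ≤ d → ε ∈ Set.Ioo (0 : ℝ) (1/2) →
            ∃ n : ℕ,
              (n : ℝ) ≤ C * d ^ 2 * Real.log d * ε ^ (-p) * Real.log ε⁻¹ ^ 4 ∧
              ∃ (x : Fin n → (Fin d → ℝ)) (φ : (Fin n → ℂ) → ((Fin d → ℝ) → ℂ)),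
                (∀ i, x i ∈ cube d) ∧
                ∀ f ∈ Fmix s d,
                  eLpNorm (fun t => f t - φ (fun i => f (x i)) t) (ENNReal.ofReal p)
                      (volume.restrict (cube d)) ≤ ENNReal.ofReal ε)) := by
  intro s p hs hp
  exact ⟨(statement6_general hs (by linarith)).1,
    exists_card_le_sq_mul_log_mul_rpow_mul_log_pow hs⟩
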